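/- arXiv:1312.2185 — 2 statements merged into one kernel-verified Lean document; each statement's English description precedes it below -/
import Mathlib

section
/- There is an absolute constant C such that every locally Gabriel graph on a set P of n points in convex position in the Euclidean plane (n ≥ 2) has at most 2n·log₂ n + C·n edges. -/
open EuclideanGeometry

/-- A finite set of points in the plane is in convex position if every point of the set is an
extreme point of its convex hull. -/
def ConvexPosition (P : Set (EuclideanSpace ℝ (Fin 2))) : Prop :=
  ∀ p ∈ P, p ∈ (convexHull ℝ P).extremePoints ℝ

/-- `E` is the edge set of a locally Gabriel graph on the point set `P`: edges join distinct
points of `P`, the edge relation is symmetric, and whenever `(u, v)` and `(u, w)` are edges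
with `v ≠ w`, both angles `∠uvw` and `∠uwv` are strictly less than `π/2`. -/
def IsLGG (P : Set (EuclideanSpace ℝ (Fin 2)))
    (E : Set (EuclideanSpace ℝ (Fin 2) × EuclideanSpace ℝ (Fin 2))) : Prop :=
  (∀ e ∈ E, e.1 ∈ P ∧ e.2 ∈ P ∧ e.1 ≠ e.2) ∧
  (∀ u v, (u, v) ∈ E → (v, u) ∈ E) ∧
  (∀ u v w, (u, v) ∈ E → (u, w) ∈ E → v ≠ w →
    EuclideanGeometry.angle u v w < Real.pi / 2 ∧
      EuclideanGeometry.angle u w v < Real.pi / 2)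

/-!
Sort the points along a generic direction and split them into a lower chain, where every path
turns left, and an upper chain, where every path turns right. If a path `p, q, r, s` turns left at
`q` and at `r` and both angles there are acute, then it turns by more than `π`. Hence a chain,
which turns by less than `π` in total, contains no such path, and a convex quadrilateral, which
turns by `2π`, does not have four acute angles.

If `uv` and `uw` are edges then the angle at `v` is acute. Within a chain this makes the adjacency
matrix of the graph hook-free, so a chain carries linearly many edges. Between the chains, two
facing hooks would span a quadrilateral with four acute angles. Halving the columns of a matrix
without facing hooks leaves, after discarding linearly many entries, two such matrices with
disjoint rows and disjoint columns of half the size, which gives `n log₂ n`.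
-/

section ZeroOneMatrix

open Finset

variable {α β : Type*}

/-- A finite 0-1 matrix, given as the set `F` of its nonzero entries, is hook-free for the
relations `r` and `s` if no entry has both an `r`-larger entry in its column and an `s`-larger
entry in its row. -/
def HookFree (r : α → α → Prop) (s : β → β → Prop) (F : Finset (α × β)) : Prop :=
  ∀ ⦃a a' b b'⦄, (a, b) ∈ F → (a', b) ∈ F → (a, b') ∈ F → r a a' → ¬s b b'

theorem HookFree.card_le {r : α → α → Prop} {s : β → β → Prop} [Std.Trichotomous r]
    [Std.Trichotomous s] {F : Finset (α × β)} {A : Finset α} {B : Finset β}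
    (h : HookFree r s F) (hF : F ⊆ A ×ˢ B) : #F ≤ #A + #B := by
  classical
  let IsRowMax (e : α × β) : Prop := ∀ b', (e.1, b') ∈ F → ¬s e.2 b'
  have row_le : #{e ∈ F | IsRowMax e} ≤ #A := by
    refine card_le_card_of_injOn Prod.fst
      (fun e he => (mem_product.1 (hF (mem_filter.1 he).1)).1) ?_
    rintro ⟨a, b⟩ hab ⟨a', b'⟩ hab' (rfl : a = a')
    obtain ⟨hab, hmax⟩ := mem_filter.1 hab
    obtain ⟨hab', hmax'⟩ := mem_filter.1 hab'
    exact congrArg (a, ·) (Std.Trichotomous.trichotomous b b' (hmax b' hab') (hmax' b hab))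
  have col_le : #{e ∈ F | ¬IsRowMax e} ≤ #B := by
    refine card_le_card_of_injOn Prod.snd
      (fun e he => (mem_product.1 (hF (mem_filter.1 he).1)).2) ?_
    rintro ⟨a, b⟩ hab ⟨a', b'⟩ hab' (rfl : b = b')
    obtain ⟨hab, hmax⟩ := mem_filter.1 hab
    obtain ⟨hab', hmax'⟩ := mem_filter.1 hab'
    simp only [IsRowMax, not_forall, not_not] at hmax hmax'
    obtain ⟨c, hc, hbc⟩ := hmax
    obtain ⟨c', hc', hbc'⟩ := hmax'
    exact congrArg (·, b) (Std.Trichotomous.trichotomous a a'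
      (fun haa' => h hab hab' hc haa' hbc) (fun ha'a => h hab' hab hc' ha'a hbc'))
  rw [← card_filter_add_card_filter_not IsRowMax]
  exact add_le_add row_le col_le

theorem card_le_add_card_inter_product [DecidableEq α] [DecidableEq β] {F : Finset (α × β)}
    {A₁ A₂ : Finset α} {B₁ B₂ : Finset β} (hF : F ⊆ (A₁ ∪ A₂) ×ˢ (B₁ ∪ B₂)) :
    #F ≤ #(F ∩ A₁ ×ˢ B₁) + #(F ∩ A₁ ×ˢ B₂) + (#(F ∩ A₂ ×ˢ B₁) + #(F ∩ A₂ ×ˢ B₂)) := by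
  calc #F = #((F ∩ A₁ ×ˢ B₁ ∪ F ∩ A₁ ×ˢ B₂) ∪ (F ∩ A₂ ×ˢ B₁ ∪ F ∩ A₂ ×ˢ B₂)) := by
        simp only [← inter_union_distrib_left, ← product_union, ← union_product,
          inter_eq_left.2 hF]
    _ ≤ _ := (card_union_le _ _).trans (add_le_add (card_union_le _ _) (card_union_le _ _))

theorem exists_subset_card_eq_forall_lt [LinearOrder β] (B : Finset β) {j : ℕ} (hj : j ≤ #B) :
    ∃ L ⊆ B, #L = j ∧ ∀ x ∈ L, ∀ y ∈ B \ L, x < y := by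
  induction j with
  | zero => exact ⟨∅, by simp⟩
  | succ j ih =>
    obtain ⟨L, hL, rfl, hlt⟩ := ih (by lia)
    have hne : (B \ L).Nonempty := sdiff_nonempty.2 fun h => by
      have := card_le_card h
      lia
    obtain ⟨hmB, hmL⟩ := mem_sdiff.1 ((B \ L).min'_mem hne)
    refine ⟨insert ((B \ L).min' hne) L, insert_subset hmB hL, card_insert_of_notMem hmL, ?_⟩
    intro x hx y hy
    obtain ⟨hyB, hym, hyL⟩ : y ∈ B ∧ y ≠ (B \ L).min' hne ∧ y ∉ L := by
      simpa only [mem_sdiff, mem_insert, not_or] using hy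
    have hy' : y ∈ B \ L := mem_sdiff.2 ⟨hyB, hyL⟩
    rcases mem_insert.1 hx with rfl | hx
    · exact ((B \ L).min'_le y hy').lt_of_ne' hym
    · exact hlt x hx y hy'

variable [LinearOrder α] [LinearOrder β] {F : Finset (α × β)}

/-- A finite 0-1 matrix, given as the set `F` of its nonzero entries, is double-hook-free if no
rectangle `[a, a'] × [b, b']` has nonzero entries at the opposite corners `(a, b)` and `(a', b')`
together with another nonzero entry on each of the four sides; each of `(a₁, b)`, `(a, b₁)`,
`(a₂, b')`, `(a', b₂)` may be one of the remaining two corners. -/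
def DoubleHookFree (F : Finset (α × β)) : Prop :=
  ∀ ⦃a a₁ a₂ a' : α⦄ ⦃b b₁ b₂ b' : β⦄, (a, b) ∈ F → (a₁, b) ∈ F → (a, b₁) ∈ F →
    (a', b') ∈ F → (a₂, b') ∈ F → (a', b₂) ∈ F → a₁ ∈ Set.Ioc a a' → b₁ ∈ Set.Ioc b b' →
    a₂ ∈ Set.Ico a a' → b₂ ∉ Set.Ico b b'

theorem DoubleHookFree.mono {G : Finset (α × β)} (h : DoubleHookFree F) (hGF : G ⊆ F) :
    DoubleHookFree G :=
  fun _ _ _ _ _ _ _ _ hab ha₁ hb₁ hab' ha₂ hb₂ =>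
    h (hGF hab) (hGF ha₁) (hGF hb₁) (hGF hab') (hGF ha₂) (hGF hb₂)

theorem DoubleHookFree.exists_hookFree_hookFree (h : DoubleHookFree F) (A : Finset α)
    {L R : Finset β} (hLR : ∀ x ∈ L, ∀ y ∈ R, x < y) :
    ∃ A₁ ⊆ A, HookFree (· < ·) (· < ·) (F ∩ A₁ ×ˢ L) ∧
      HookFree (· > ·) (· > ·) (F ∩ (A \ A₁) ×ˢ R) := by
  classical
  -- `A₁` consists of the rows weakly below the lower end `a₂` of some upper hook in `R`.
  refine ⟨{a ∈ A | ∃ a' a₂ b' b₂, a ≤ a₂ ∧ a₂ < a' ∧ b₂ < b' ∧ b₂ ∈ R ∧ b' ∈ R ∧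
    (a', b') ∈ F ∧ (a₂, b') ∈ F ∧ (a', b₂) ∈ F}, filter_subset _ _, ?_, ?_⟩
  · intro a a₁ b b₁ hab ha₁ hb₁ haa₁ hbb₁
    simp only [mem_inter, mem_product, mem_filter] at hab ha₁ hb₁
    obtain ⟨a', a₂, b', b₂, ha₁a₂, ha₂a', hb₂b', hb₂R, hb'R, hab', ha₂, hb₂⟩ := ha₁.2.1.2
    exact h hab.1 ha₁.1 hb₁.1 hab' ha₂ hb₂ ⟨haa₁, ha₁a₂.trans ha₂a'.le⟩
      ⟨hbb₁, (hLR b₁ hb₁.2.2 b' hb'R).le⟩ ⟨haa₁.le.trans ha₁a₂, ha₂a'⟩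
      ⟨(hLR b hab.2.2 b₂ hb₂R).le, hb₂b'⟩
  · intro a' a₂ b' b₂ hab' ha₂ hb₂ ha₂a' hb₂b'
    simp only [mem_inter, mem_product, mem_sdiff, mem_filter, not_and] at hab' ha₂ hb₂
    exact ha₂.2.1.2 ha₂.2.1.1 ⟨a', a₂, b', b₂, le_rfl, ha₂a', hb₂b', hb₂.2.2, hab'.2.2, hab'.1,
      ha₂.1, hb₂.1⟩

theorem DoubleHookFree.card_le (h : DoubleHookFree F) {A : Finset α} {B : Finset β}
    (hF : F ⊆ A ×ˢ B) {k : ℕ} (hB : #B ≤ 2 ^ k) : #F ≤ (#A + #B) * k + #A := by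
  induction k generalizing F A B with
  | zero =>
    calc #F ≤ #A * #B := (card_le_card hF).trans_eq (card_product A B)
      _ ≤ (#A + #B) * 0 + #A := by
        simpa using mul_le_of_le_one_right (Nat.zero_le #A) hB
  | succ k ih =>
    obtain ⟨L, hLB, hL, hLR⟩ := exists_subset_card_eq_forall_lt B (Nat.div_le_self #B 2)
    obtain ⟨A₁, hA₁, hlower, hupper⟩ := h.exists_hookFree_hookFree A hLR
    have hA_card := card_sdiff_add_card_eq_card hA₁
    have hB_card := card_sdiff_add_card_eq_card hLB
    have hF_card : #F ≤ #(F ∩ A₁ ×ˢ L) + #(F ∩ A₁ ×ˢ (B \ L)) +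
        (#(F ∩ (A \ A₁) ×ˢ L) + #(F ∩ (A \ A₁) ×ˢ (B \ L))) :=
      card_le_add_card_inter_product
        (by rwa [union_sdiff_of_subset hA₁, union_sdiff_of_subset hLB])
    have h₁L : #(F ∩ A₁ ×ˢ L) ≤ #A₁ + #L := hlower.card_le inter_subset_right
    have h₂R : #(F ∩ (A \ A₁) ×ˢ (B \ L)) ≤ #(A \ A₁) + #(B \ L) :=
      hupper.card_le inter_subset_right
    have h₁R : #(F ∩ A₁ ×ˢ (B \ L)) ≤ (#A₁ + #(B \ L)) * k + #A₁ :=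
      ih (h.mono inter_subset_left) inter_subset_right (by rw [pow_succ] at hB; lia)
    have h₂L : #(F ∩ (A \ A₁) ×ˢ L) ≤ (#(A \ A₁) + #L) * k + #(A \ A₁) :=
      ih (h.mono inter_subset_left) inter_subset_right (by rw [pow_succ] at hB; lia)
    rw [← hA_card, ← hB_card]
    linarith

end ZeroOneMatrix

section InnerProductSpace

open scoped RealInnerProductSpace

variable {E : Type*} [NormedAddCommGroup E] [InnerProductSpace ℝ E]

theorem exists_injective_inner {ι : Type*} [Finite ι] {x : ι → E}
    (hx : Function.Injective x) : ∃ d : E, Function.Injective fun i => ⟪d, x i⟫ := by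
  obtain ⟨d, hd⟩ := Module.Dual.exists_forall_ne_zero_of_forall_exists
    (fun e : {e : ι × ι // e.1 ≠ e.2} => innerₗ E (x e.1.1 - x e.1.2))
    fun e => ⟨x e.1.1 - x e.1.2, inner_self_ne_zero.2 (sub_ne_zero.2 (hx.ne e.2))⟩
  refine ⟨d, fun i j hij => ?_⟩
  by_contra hne
  refine hd ⟨(i, j), hne⟩ ?_
  rw [innerₗ_apply_apply, real_inner_comm, inner_sub_right, sub_eq_zero]
  exact hij

theorem exists_inner_lt_of_mem_extremePoints [CompleteSpace E] {P : Set E} (hP : P.Finite)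
    {p : E} (hp : p ∈ (convexHull ℝ P).extremePoints ℝ) :
    ∃ n : E, ∀ q ∈ P, q ≠ p → ⟪n, p⟫ < ⟪n, q⟫ := by
  have hp_notMem : p ∉ convexHull ℝ (P \ {p}) := fun hmem =>
    (((convex_convexHull ℝ P).mem_extremePoints_iff_mem_sdiff_convexHull_sdiff).1 hp).2
      (convexHull_mono (Set.sdiff_subset_sdiff_left (subset_convexHull ℝ P)) hmem)
  obtain ⟨f, c, hpc, hcf⟩ := geometric_hahn_banach_point_closed (convex_convexHull ℝ _)
    (hP.sdiff.isClosed_convexHull ℝ) hp_notMem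
  refine ⟨(InnerProductSpace.toDual ℝ E).symm f, fun q hq hqp => ?_⟩
  simp only [InnerProductSpace.toDual_symm_apply]
  exact hpc.trans (hcf q (subset_convexHull ℝ _ ⟨hq, hqp⟩))

end InnerProductSpace

section OrientedPlane

open scoped RealInnerProductSpace

variable {V : Type*} [NormedAddCommGroup V] [InnerProductSpace ℝ V]
  [Fact (Module.finrank ℝ V = 2)] (o : Orientation ℝ V (Fin 2))

theorem areaForm_mul_areaForm (x y a b : V) :
    o.areaForm a b * o.areaForm x y = ⟪a, x⟫ * ⟪b, y⟫ - ⟪a, y⟫ * ⟪b, x⟫ := by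
  rcases eq_or_ne a 0 with rfl | ha
  · simp
  · have ha' : ‖a‖ ^ 2 ≠ 0 := by simpa using ha
    refine mul_left_cancel₀ ha' ?_
    linear_combination -o.areaForm a b * o.inner_mul_areaForm_sub a x y +
      ⟪a, x⟫ * o.inner_mul_inner_add_areaForm_mul_areaForm a b y -
      ⟪a, y⟫ * o.inner_mul_inner_add_areaForm_mul_areaForm a b x

theorem areaForm_pos_trans {d x y z : V} (hx : 0 < ⟪d, x⟫) (hy : 0 < ⟪d, y⟫) (hz : 0 < ⟪d, z⟫)
    (hxy : 0 < o.areaForm x y) (hyz : 0 < o.areaForm y z) : 0 < o.areaForm x z := by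
  have hd : 0 < ‖d‖ ^ 2 := by
    have : d ≠ 0 := by rintro rfl; simp at hx
    positivity
  have key : ⟪d, y⟫ * o.areaForm x z = ⟪d, x⟫ * o.areaForm y z + ⟪d, z⟫ * o.areaForm x y := by
    refine mul_left_cancel₀ hd.ne' ?_
    linear_combination ⟪d, x⟫ * o.inner_mul_areaForm_sub d y z +
      ⟪d, z⟫ * o.inner_mul_areaForm_sub d x y - ⟪d, y⟫ * o.inner_mul_areaForm_sub d x z
  exact pos_of_mul_pos_right (key ▸ by positivity) hy.le

theorem areaForm_neg_of_inner_neg {x y z : V} (hxy : 0 < o.areaForm x y)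
    (hyz : 0 < o.areaForm y z) (hxy' : ⟪x, y⟫ < 0) (hyz' : ⟪y, z⟫ < 0) :
    o.areaForm x z < 0 := by
  have key : ‖y‖ ^ 2 * o.areaForm x z = ⟪x, y⟫ * o.areaForm y z + o.areaForm x y * ⟪y, z⟫ := by
    rw [← o.inner_mul_areaForm_sub, real_inner_comm, o.areaForm_swap y x]
    ring
  refine neg_of_mul_neg_right (key ▸ ?_) (sq_nonneg ‖y‖)
  exact add_neg (mul_neg_of_neg_of_pos hxy' hyz) (mul_neg_of_pos_of_neg hxy hyz')

theorem inner_pos_of_areaForm {u v w : V} (huv : 0 ≤ o.areaForm u v) (hvw : 0 < o.areaForm v w)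
    (huw : 0 < o.areaForm u w) (h : 0 < ⟪u, w⟫) : 0 < ⟪v, w⟫ := by
  have key : o.areaForm u w * ⟪v, w⟫ = o.areaForm v w * ⟪u, w⟫ + ‖w‖ ^ 2 * o.areaForm u v := by
    rw [← o.inner_mul_areaForm_sub, real_inner_comm w v, real_inner_comm w u,
      o.areaForm_swap w v, o.areaForm_swap w u]
    ring
  exact pos_of_mul_pos_right (key ▸ by positivity) huw.le

/-- The signed area of the parallelogram spanned by `q - p` and `r - q`, which is positive when
the path `p, q, r` turns left. -/
noncomputable def turn (p q r : V) : ℝ := o.areaForm (q - p) (r - q)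

theorem turn_eq_areaForm (p q r : V) : turn o p q r = o.areaForm (q - p) (r - p) := by
  rw [turn, ← sub_sub_sub_cancel_right r q p, map_sub, o.areaForm_apply_self, sub_zero]

theorem turn_swap (p q r : V) : turn o p r q = -turn o p q r := by
  rw [turn_eq_areaForm, turn_eq_areaForm, o.areaForm_swap]

theorem turn_rotate (p q r : V) : turn o q r p = turn o p q r := by
  rw [turn_eq_areaForm, turn, o.areaForm_swap, ← neg_sub q p, map_neg, LinearMap.neg_apply,
    neg_neg]

theorem turn_neg_orientation (p q r : V) : turn (-o) p q r = -turn o p q r := by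
  simp [turn]

variable {o} {p q r s : V}

theorem areaForm_neg_of_turn_pos (hpqr : 0 < turn o p q r) (hqrs : 0 < turn o q r s)
    (hq : 0 < ⟪p - q, r - q⟫) (hr : 0 < ⟪q - r, s - r⟫) : o.areaForm (q - p) (s - r) < 0 := by
  refine areaForm_neg_of_inner_neg o hpqr hqrs ?_ ?_
  · rwa [← neg_sub p q, inner_neg_left, neg_lt_zero]
  · rwa [← neg_sub q r, inner_neg_left, neg_lt_zero]

theorem not_all_acute_of_turn_pos (hpqr : 0 < turn o p q r) (hqrs : 0 < turn o q r s)
    (hrsp : 0 < turn o r s p) (hspq : 0 < turn o s p q) (hp : 0 < ⟪s - p, q - p⟫)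
    (hq : 0 < ⟪p - q, r - q⟫) (hr : 0 < ⟪q - r, s - r⟫) : ¬0 < ⟪r - s, p - s⟫ := by
  intro hs
  have hpq_rs := areaForm_neg_of_turn_pos hpqr hqrs hq hr
  have hrs_pq := areaForm_neg_of_turn_pos hrsp hspq hs hp
  rw [o.areaForm_swap] at hrs_pq
  linarith

theorem not_acute_of_acute_of_inner_lt {d : V} (hpq : ⟪d, p⟫ < ⟪d, q⟫) (hqr : ⟪d, q⟫ < ⟪d, r⟫)
    (hrs : ⟪d, r⟫ < ⟪d, s⟫) (hpqr : 0 < turn o p q r) (hqrs : 0 < turn o q r s)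
    (hq : 0 < ⟪p - q, r - q⟫) : ¬0 < ⟪q - r, s - r⟫ := by
  intro hr
  have inner_sub_pos {u v : V} (h : ⟪d, u⟫ < ⟪d, v⟫) : 0 < ⟪d, v - u⟫ := by
    rwa [inner_sub_right, sub_pos]
  exact (areaForm_neg_of_turn_pos hpqr hqrs hq hr).not_gt
    (areaForm_pos_trans o (inner_sub_pos hpq) (inner_sub_pos hqr) (inner_sub_pos hrs) hpqr hqrs)

variable {ι : Type*}

/-- A graph `G` drawn with straight edges by placing its vertices at the points `x i` is locally
Gabriel if, for any two edges `uv` and `uw`, the angle `∠uvw` is acute, here expressed by a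
positive inner product. Exchanging `v` and `w` gives the same for `∠uwv`. -/
def IsLocallyGabriel (x : ι → V) (G : SimpleGraph ι) : Prop :=
  ∀ ⦃u v w⦄, G.Adj u v → G.Adj u w → v ≠ w → 0 < ⟪x u - x v, x w - x v⟫

variable [LinearOrder ι] {x : ι → V}

/-- The points `x i`, listed in increasing order of `i`, make a left turn at `p` whichever point
before `p` and whichever point after `p` is chosen. When the points are sorted by abscissa, this
says that `p` is a vertex of their lower hull; for the opposite orientation, of their upper hull. -/
def TurnsLeftAt (o : Orientation ℝ V (Fin 2)) (x : ι → V) (p : ι) : Prop :=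
  ∀ ⦃u v⦄, u < p → p < v → 0 < turn o (x u) (x p) (x v)

/-- The disjoint sets `A` and `B` consist of vertices of the lower hull and of the upper hull,
respectively. -/
structure IsChainPair (o : Orientation ℝ V (Fin 2)) (x : ι → V) (A B : Finset ι) : Prop where
  disjoint : Disjoint A B
  lower : ∀ ⦃p⦄, p ∈ A → TurnsLeftAt o x p
  upper : ∀ ⦃p⦄, p ∈ B → TurnsLeftAt (-o) x p

namespace IsChainPair

variable {A B : Finset ι} {a a₁ a₂ a' b : ι}

theorem symm (h : IsChainPair o x A B) : IsChainPair (-o) x B A where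
  disjoint := h.disjoint.symm
  lower := h.upper
  upper := (neg_neg o).symm ▸ h.lower

theorem turn_pos (h : IsChainPair o x A B) (ha : a ∈ A) (ha' : a' ∈ A) (hb : b ∈ B)
    (haa' : a < a') : 0 < turn o (x a) (x a') (x b) := by
  have hab : a ≠ b := Finset.disjoint_iff_ne.1 h.disjoint a ha b hb
  have ha'b : a' ≠ b := Finset.disjoint_iff_ne.1 h.disjoint a' ha' b hb
  rcases hab.lt_or_gt with hab | hba
  · rcases ha'b.lt_or_gt with ha'b | hba'
    · exact h.lower ha' haa' ha'b
    · rw [turn_swap, ← turn_neg_orientation]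
      exact h.upper hb hab hba'
  · rw [turn_rotate]
    exact h.lower ha hba haa'

theorem acute_left (h : IsChainPair o x A B) (ha : a ∈ A) (ha₁ : a₁ ∈ A) (ha' : a' ∈ A)
    (hb : b ∈ B) (ha₁a' : a₁ ∈ Set.Ioc a a') (hacute : 0 < ⟪x b - x a, x a₁ - x a⟫) :
    0 < ⟪x b - x a, x a' - x a⟫ := by
  rcases ha₁a'.2.eq_or_lt with rfl | hlt
  · exact hacute
  rw [real_inner_comm] at hacute ⊢
  have ha₁a'_turn := h.lower ha₁ ha₁a'.1 hlt
  have ha'b_turn := h.turn_pos ha ha' hb (ha₁a'.1.trans hlt)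
  have ha₁b_turn := h.turn_pos ha ha₁ hb ha₁a'.1
  rw [turn_eq_areaForm] at ha₁a'_turn ha'b_turn ha₁b_turn
  exact inner_pos_of_areaForm o ha₁a'_turn.le ha'b_turn ha₁b_turn hacute

theorem acute_right (h : IsChainPair o x A B) (ha : a ∈ A) (ha₂ : a₂ ∈ A) (ha' : a' ∈ A)
    (hb : b ∈ B) (ha₂a' : a₂ ∈ Set.Ico a a') (hacute : 0 < ⟪x b - x a', x a₂ - x a'⟫) :
    0 < ⟪x b - x a', x a - x a'⟫ := by
  rcases ha₂a'.1.eq_or_lt with rfl | hlt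
  · exact hacute
  rw [real_inner_comm] at hacute ⊢
  have haa₂_turn := h.lower ha₂ hlt ha₂a'.2
  have hab_turn := h.turn_pos ha ha' hb (hlt.trans ha₂a'.2)
  have ha₂b_turn := h.turn_pos ha₂ ha' hb ha₂a'.2
  rw [← turn_rotate, ← turn_rotate, turn_swap, ← turn_neg_orientation, turn_eq_areaForm]
    at haa₂_turn
  rw [← turn_rotate, turn_swap, ← turn_neg_orientation, turn_eq_areaForm] at hab_turn ha₂b_turn
  exact inner_pos_of_areaForm (-o) haa₂_turn.le hab_turn ha₂b_turn hacute

theorem doubleHookFree_interedges (h : IsChainPair o x A B) {G : SimpleGraph ι}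
    [DecidableRel G.Adj] (hG : IsLocallyGabriel x G) : DoubleHookFree (G.interedges A B) := by
  intro a a₁ a₂ a' b b₁ b₂ b' hab ha₁b hab₁ ha'b' ha₂b' ha'b₂ ha₁ hb₁ ha₂ hb₂
  rw [SimpleGraph.mem_interedges_iff] at hab ha₁b hab₁ ha'b' ha₂b' ha'b₂
  obtain ⟨ha, hb, hab⟩ := hab
  obtain ⟨ha', hb', ha'b'⟩ := ha'b'
  have haa' : a < a' := ha₁.1.trans_le ha₁.2
  have hbb' : b < b' := hb₁.1.trans_le hb₁.2
  have acute_a : 0 < ⟪x b - x a, x a' - x a⟫ :=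
    h.acute_left ha ha₁b.1 ha' hb ha₁ (hG hab.symm ha₁b.2.2.symm ha₁.1.ne)
  have acute_a' : 0 < ⟪x b' - x a', x a - x a'⟫ :=
    h.acute_right ha ha₂b'.1 ha' hb' ha₂ (hG ha'b'.symm ha₂b'.2.2.symm ha₂.2.ne')
  have acute_b' : 0 < ⟪x a' - x b', x b - x b'⟫ :=
    h.symm.acute_right hb ha'b₂.2.1 hb' ha' hb₂ (hG ha'b' ha'b₂.2.2 hb₂.2.ne')
  have acute_b : 0 < ⟪x a - x b, x b' - x b⟫ :=
    h.symm.acute_left hb hab₁.2.1 hb' ha hb₁ (hG hab hab₁.2.2 hb₁.1.ne)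
  refine not_all_acute_of_turn_pos (h.turn_pos ha ha' hb' haa') ?_ ?_ ?_ acute_a
    (by rwa [real_inner_comm]) acute_b' (by rwa [real_inner_comm])
  · have := h.symm.turn_pos hb hb' ha' hbb'
    rwa [turn_neg_orientation, ← turn_swap, ← turn_rotate] at this
  · have := h.symm.turn_pos hb hb' ha hbb'
    rwa [turn_neg_orientation, ← turn_swap, ← turn_rotate, ← turn_rotate] at this
  · rw [← turn_rotate]
    exact h.turn_pos ha ha' hb haa'

end IsChainPair

section

open Finset

theorem card_interedges_self_le_two_mul {G : SimpleGraph ι} [DecidableRel G.Adj] (A : Finset ι) :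
    #(G.interedges A A) ≤ 2 * #{e ∈ G.interedges A A | e.1 < e.2} := by
  have hgt : #{e ∈ G.interedges A A | ¬e.1 < e.2} ≤ #{e ∈ G.interedges A A | e.1 < e.2} := by
    refine card_le_card_of_injOn Prod.swap ?_ Prod.swap_injective.injOn
    rintro ⟨a, b⟩ he
    simp only [coe_filter, SimpleGraph.mem_interedges_iff, Set.mem_ofPred_eq, not_lt,
      Prod.swap_prod_mk] at he ⊢
    exact ⟨⟨he.1.2.1, he.1.1, he.1.2.2.symm⟩, he.2.lt_of_ne he.1.2.2.ne'⟩
  rw [← card_filter_add_card_filter_not (s := G.interedges A A) (fun e => e.1 < e.2), two_mul]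
  gcongr

theorem IsLocallyGabriel.hookFree_interedges {G : SimpleGraph ι} [DecidableRel G.Adj]
    (hG : IsLocallyGabriel x G) {d : V} (hd : StrictMono fun i => ⟪d, x i⟫) {A : Finset ι}
    (hA : ∀ p ∈ A, TurnsLeftAt o x p) :
    HookFree (· > ·) (· < ·) {e ∈ G.interedges A A | e.1 < e.2} := by
  intro q p r s hqr hpr hqs hpq hrs
  simp only [mem_filter, SimpleGraph.mem_interedges_iff] at hqr hpr hqs
  obtain ⟨⟨hq, hr, hqr⟩, hlt⟩ := hqr
  have hpqr_acute : 0 < ⟪x p - x q, x r - x q⟫ := by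
    rw [real_inner_comm]
    exact hG hqr.symm hpr.1.2.2.symm hpq.ne'
  exact not_acute_of_acute_of_inner_lt (hd hpq) (hd hlt) (hd hrs) (hA q hq hpq hlt)
    (hA r hr hlt hrs) hpqr_acute (hG hqr hqs.1.2.2 hrs.ne)

theorem IsLocallyGabriel.card_interedges_self_le {G : SimpleGraph ι} [DecidableRel G.Adj]
    (hG : IsLocallyGabriel x G) {d : V} (hd : StrictMono fun i => ⟪d, x i⟫) {A : Finset ι}
    (hA : ∀ p ∈ A, TurnsLeftAt o x p) : #(G.interedges A A) ≤ 4 * #A := by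
  have := (hG.hookFree_interedges hd hA).card_le
    ((filter_subset _ _).trans (filter_subset _ _))
  have := card_interedges_self_le_two_mul (G := G) A
  lia

theorem IsChainPair.card_edgeFinset_le [Fintype ι] {A B : Finset ι} (h : IsChainPair o x A B)
    (hAB : A ∪ B = univ) {d : V} (hd : StrictMono fun i => ⟪d, x i⟫) {G : SimpleGraph ι}
    [DecidableRel G.Adj] (hG : IsLocallyGabriel x G) {k : ℕ} (hk : Fintype.card ι ≤ 2 ^ k) :
    #G.edgeFinset ≤ Fintype.card ι * (k + 3) := by
  have card_add : #A + #B = Fintype.card ι := by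
    rw [← card_union_of_disjoint h.disjoint, hAB, card_univ]
  have hsplit := card_le_add_card_inter_product (F := G.interedges univ univ)
    (A₁ := A) (A₂ := B) (B₁ := A) (B₂ := B) (by simp [hAB])
  have inter_product (S T : Finset ι) :
      G.interedges univ univ ∩ S ×ˢ T = G.interedges S T := by
    ext
    simp [SimpleGraph.mem_interedges_iff, and_comm, and_assoc]
  simp only [inter_product] at hsplit
  have hAA_le := hG.card_interedges_self_le hd h.lower
  have hBB_le := hG.card_interedges_self_le hd h.upper
  have hAB_le : #(G.interedges A B) ≤ (#A + #B) * k + #A :=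
    (h.doubleHookFree_interedges hG).card_le (filter_subset _ _) (by lia)
  have hBA_le : #(G.interedges B A) ≤ (#B + #A) * k + #B :=
    (h.symm.doubleHookFree_interedges hG).card_le (filter_subset _ _) (by lia)
  have hedges : 2 * #G.edgeFinset = #(G.interedges univ univ) := by
    rw [SimpleGraph.two_mul_card_edgeFinset]
    rfl
  rw [← card_add]
  linarith

end

theorem turnsLeftAt_or_of_forall_inner_lt (o : Orientation ℝ V (Fin 2)) {d n : V} {p : ι}
    (hd : StrictMono fun i => ⟪d, x i⟫) (hn : ∀ i ≠ p, ⟪n, x p⟫ < ⟪n, x i⟫) :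
    TurnsLeftAt o x p ∨ TurnsLeftAt (-o) x p := by
  have areaForm_mul_turn_neg {u v : ι} (hu : u < p) (hv : p < v) :
      o.areaForm n d * turn o (x u) (x p) (x v) < 0 := by
    have hd_u : 0 < ⟪d, x p - x u⟫ := by simpa only [inner_sub_right, sub_pos] using hd hu
    have hd_v : 0 < ⟪d, x v - x p⟫ := by simpa only [inner_sub_right, sub_pos] using hd hv
    have hn_u : ⟪n, x p - x u⟫ < 0 := by
      simpa only [inner_sub_right, sub_neg] using hn u hu.ne
    have hn_v : 0 < ⟪n, x v - x p⟫ := by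
      simpa only [inner_sub_right, sub_pos] using hn v hv.ne'
    rw [turn, areaForm_mul_areaForm]
    exact sub_neg_of_lt ((mul_neg_of_neg_of_pos hn_u hd_v).trans (mul_pos hn_v hd_u))
  rcases le_total (o.areaForm n d) 0 with hnd | hnd
  · exact .inl fun u v hu hv => pos_of_mul_neg_right (areaForm_mul_turn_neg hu hv) hnd
  · refine .inr fun u v hu hv => ?_
    rw [turn_neg_orientation, neg_pos]
    exact neg_of_mul_neg_right (areaForm_mul_turn_neg hu hv) hnd

theorem exists_isChainPair_of_mem_extremePoints [Fintype ι] (o : Orientation ℝ V (Fin 2)) {d : V}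
    (hd : StrictMono fun i => ⟪d, x i⟫)
    (hconv : ∀ i, x i ∈ (convexHull ℝ (Set.range x)).extremePoints ℝ) :
    ∃ A B : Finset ι, IsChainPair o x A B ∧ A ∪ B = Finset.univ := by
  classical
  have : FiniteDimensional ℝ V := .of_fact_finrank_eq_two
  have hx : Function.Injective x := hd.injective.of_comp (f := fun v => ⟪d, v⟫)
  have hturn (p : ι) : TurnsLeftAt o x p ∨ TurnsLeftAt (-o) x p := by
    obtain ⟨n, hn⟩ := exists_inner_lt_of_mem_extremePoints (Set.finite_range x) (hconv p)
    exact turnsLeftAt_or_of_forall_inner_lt o hd fun i hi => hn (x i) ⟨i, rfl⟩ (hx.ne hi)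
  refine ⟨({p | TurnsLeftAt o x p} : Finset ι), ({p | ¬TurnsLeftAt o x p} : Finset ι),
    { disjoint := Finset.disjoint_filter_filter_not _ _ _
      lower := fun p hp => (Finset.mem_filter.1 hp).2
      upper := fun p hp => (hturn p).resolve_left (Finset.mem_filter.1 hp).2 },
    Finset.filter_union_filter_not_eq _ _⟩

theorem lgg_convex_position_edge_bound_general {ι : Type*} [Finite ι] {x : ι → V}
    (hx : Function.Injective x)
    (hconv : ∀ i, x i ∈ (convexHull ℝ (Set.range x)).extremePoints ℝ) {G : SimpleGraph ι}
    (hG : IsLocallyGabriel x G) :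
    (G.edgeSet.ncard : ℝ) ≤ Nat.card ι * (Real.logb 2 (Nat.card ι) + 4) := by
  classical
  have := Fintype.ofFinite ι
  obtain ⟨d, hd_inj⟩ := exists_injective_inner hx
  let : LinearOrder ι := LinearOrder.lift' _ hd_inj
  have hd : StrictMono fun i => ⟪d, x i⟫ := fun _ _ => id
  have : FiniteDimensional ℝ V := .of_fact_finrank_eq_two
  let o : Orientation ℝ V (Fin 2) :=
    (Module.finBasisOfFinrankEq ℝ V Fact.out).orientation
  obtain ⟨A, B, hchain, hAB⟩ := exists_isChainPair_of_mem_extremePoints o hd hconv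
  have hcard := hchain.card_edgeFinset_le hAB hd hG (Nat.lt_pow_succ_log_self one_lt_two _).le
  rw [Nat.card_eq_fintype_card, Set.ncard_eq_toFinset_card']
  calc (G.edgeFinset.card : ℝ)
      ≤ Fintype.card ι * (Nat.log 2 (Fintype.card ι) + 4) := by exact_mod_cast hcard
    _ ≤ Fintype.card ι * (Real.logb 2 (Fintype.card ι) + 4) := by
      gcongr
      exact Real.natLog_le_logb _ _

end OrientedPlane

theorem inner_pos_of_angle_lt_pi_div_two {V : Type*} [NormedAddCommGroup V]
    [InnerProductSpace ℝ V] {u v : V} (h : InnerProductGeometry.angle u v < Real.pi / 2) :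
    0 < inner ℝ u v := by
  refine pos_of_mul_pos_left ?_ (inv_nonneg.2 (by positivity : 0 ≤ ‖u‖ * ‖v‖))
  exact Real.arccos_lt_pi_div_two.1 h

namespace IsLGG

variable {P : Finset (EuclideanSpace ℝ (Fin 2))}
  {E : Set (EuclideanSpace ℝ (Fin 2) × EuclideanSpace ℝ (Fin 2))}

/-- The graph on the points of `P` whose edges are the unordered pairs underlying `E`. -/
def toSimpleGraph (h : IsLGG P E) : SimpleGraph P where
  Adj u v := (u.1, v.1) ∈ E
  symm := ⟨fun u v => h.2.1 u v⟩
  loopless := ⟨fun _ hu => (h.1 _ hu).2.2 rfl⟩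

theorem isLocallyGabriel_toSimpleGraph (h : IsLGG P E) :
    IsLocallyGabriel Subtype.val h.toSimpleGraph :=
  fun u v w huv huw hvw =>
    inner_pos_of_angle_lt_pi_div_two (h.2.2 u v w huv huw (Subtype.coe_ne_coe.2 hvw)).1

theorem ncard_eq_two_mul (h : IsLGG P E) : E.ncard = 2 * h.toSimpleGraph.edgeSet.ncard := by
  classical
  let darts : Finset (P × P) := {e | h.toSimpleGraph.Adj e.1 e.2}
  have image_darts : Prod.map Subtype.val Subtype.val '' (darts : Set (P × P)) = E := by
    apply Set.Subset.antisymm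
    · rintro _ ⟨e, he, rfl⟩
      exact (Finset.mem_filter.1 he).2
    · intro e he
      obtain ⟨hu, hv, -⟩ := h.1 e he
      exact ⟨(⟨e.1, hu⟩, ⟨e.2, hv⟩), Finset.mem_filter.2 ⟨Finset.mem_univ _, he⟩, rfl⟩
  have inj : Function.Injective (Prod.map Subtype.val Subtype.val : P × P → _ × _) :=
    Subtype.val_injective.prodMap Subtype.val_injective
  rw [Set.ncard_eq_toFinset_card' h.toSimpleGraph.edgeSet]
  calc E.ncard = darts.card := by
        rw [← image_darts, Set.ncard_image_of_injective _ inj, Set.ncard_coe_finset]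
    _ = 2 * h.toSimpleGraph.edgeFinset.card := h.toSimpleGraph.two_mul_card_edgeFinset.symm

theorem ncard_le (h : IsLGG P E) (hP : ConvexPosition P) :
    (E.ncard : ℝ) ≤ 2 * (P.card * (Real.logb 2 P.card + 4)) := by
  have : Fact (Module.finrank ℝ (EuclideanSpace ℝ (Fin 2)) = 2) := ⟨finrank_euclideanSpace_fin⟩
  have hedges := lgg_convex_position_edge_bound_general Subtype.val_injective
    (fun p : P => by simpa using hP p p.2) h.isLocallyGabriel_toSimpleGraph
  rw [Nat.card_eq_fintype_card, Fintype.card_coe] at hedges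
  rw [h.ncard_eq_two_mul, Nat.cast_mul, Nat.cast_ofNat]
  gcongr

end IsLGG

/-- There is an absolute constant `C` such that every locally Gabriel graph on a set of
`n ≥ 2` points in convex position in the plane has at most `2n·log₂ n + C·n` edges.
(The edge set is symmetric, so it counts each edge twice; whence the factor `2` on the
right.) -/
theorem lgg_convex_position_edge_bound :
    ∃ C : ℝ, ∀ (P : Finset (EuclideanSpace ℝ (Fin 2)))
      (E : Set (EuclideanSpace ℝ (Fin 2) × EuclideanSpace ℝ (Fin 2))),
      2 ≤ P.card →
      ConvexPosition (P : Set (EuclideanSpace ℝ (Fin 2))) →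
      IsLGG (P : Set (EuclideanSpace ℝ (Fin 2))) E →
      (E.ncard : ℝ) ≤ 2 * (2 * P.card * Real.logb 2 P.card + C * P.card) := by
  refine ⟨4, fun P E hn hP hE => (hE.ncard_le hP).trans ?_⟩
  have hlog : 0 ≤ Real.logb 2 P.card :=
    Real.logb_nonneg one_lt_two (by exact_mod_cast one_le_two.trans hn)
  nlinarith [mul_nonneg (Nat.cast_nonneg (α := ℝ) P.card) hlog]
end

section
/- Let G be a path-restricted ordered bipartite graph, let P be a forward path in G, and let w be a vertex of G that does not lie on P. Then at most one edge of G joins w to a vertex of P. -/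
open List

/-- Adjacency relation of the bipartite graph with edge set `E ⊆ U × V`,
on the disjoint union of the two sides. -/
def BipAdj {α β : Type*} (E : Set (α × β)) : (α ⊕ β) → (α ⊕ β) → Prop
  | Sum.inl u, Sum.inr v => (u, v) ∈ E
  | Sum.inr v, Sum.inl u => (u, v) ∈ E
  | _, _ => False

/-- The `U`-vertices visited by a walk, in order of traversal. -/
def uVerts {α β : Type*} (ws : List (α ⊕ β)) : List α := ws.filterMap Sum.getLeft?

/-- The `V`-vertices visited by a walk, in order of traversal. -/
def vVerts {α β : Type*} (ws : List (α ⊕ β)) : List β := ws.filterMap Sum.getRight?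

/-- A (nonempty, simple) path in the bipartite graph with edge set `E`. -/
def IsPathList {α β : Type*} (E : Set (α × β)) (ws : List (α ⊕ β)) : Prop :=
  ws ≠ [] ∧ ws.Chain' (BipAdj E) ∧ ws.Nodup

/-- A forward path: a path whose `U`-vertices and `V`-vertices are both visited in
strictly increasing order, or both in strictly decreasing order. -/
def IsForwardPath {α β : Type*} [Preorder α] [Preorder β]
    (E : Set (α × β)) (ws : List (α ⊕ β)) : Prop :=
  IsPathList E ws ∧
    (((uVerts ws).Chain' (· < ·) ∧ (vVerts ws).Chain' (· < ·)) ∨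
      ((uVerts ws).Chain' (· > ·) ∧ (vVerts ws).Chain' (· > ·)))

/-- The internal (degree-two) vertices of a path: all but the two endpoints. -/
def internalVerts {α β : Type*} (ws : List (α ⊕ β)) : List (α ⊕ β) := (ws.drop 1).dropLast

/-- `x` is a least element of the list `l`. -/
def ListLeast {γ : Type*} [Preorder γ] (l : List γ) (x : γ) : Prop :=
  x ∈ l ∧ ∀ y ∈ l, x ≤ y

/-- `x` is a greatest element of the list `l`. -/
def ListGreatest {γ : Type*} [Preorder γ] (l : List γ) (x : γ) : Prop :=
  x ∈ l ∧ ∀ y ∈ l, y ≤ x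

/-- The forward path `ws` has a back edge: an edge of `G` joining the smallest
`U`-vertex `u_a` of `ws` to a vertex `v_j ∈ [v_c, v_d]` strictly greater than the smallest
internal `V`-vertex of `ws`, or an edge joining the smallest `V`-vertex `v_c` of `ws` to a
vertex `u_i ∈ [u_a, u_b]` strictly greater than the smallest internal `U`-vertex of `ws`. -/
def HasBackEdge {α β : Type*} [Preorder α] [Preorder β]
    (E : Set (α × β)) (ws : List (α ⊕ β)) : Prop :=
  (∃ ua vc vd vint vj,
      ListLeast (uVerts ws) ua ∧ ListLeast (vVerts ws) vc ∧ ListGreatest (vVerts ws) vd ∧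
      ListLeast (vVerts (internalVerts ws)) vint ∧
      (ua, vj) ∈ E ∧ vc ≤ vj ∧ vj ≤ vd ∧ vint < vj) ∨
  (∃ vc ua ub uint ui,
      ListLeast (vVerts ws) vc ∧ ListLeast (uVerts ws) ua ∧ ListGreatest (uVerts ws) ub ∧
      ListLeast (uVerts (internalVerts ws)) uint ∧
      (ui, vc) ∈ E ∧ ua ≤ ui ∧ ui ≤ ub ∧ uint < ui)

/-- A path-restricted ordered bipartite graph: no forward path has a back edge. -/
def IsPRBG {α β : Type*} [Preorder α] [Preorder β] (E : Set (α × β)) : Prop :=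
  ∀ ws : List (α ⊕ β), IsForwardPath E ws → ¬ HasBackEdge E ws

/-!
Reversing the path and swapping the two sides if necessary, take `P` increasing and `w = u ∈ U`,
adjacent to the vertices `v < v'` of `P`. Let `v, x, …, v'` be the segment of `P` between them.

* If `u < x`, then `u, v, x, …, v'` is an increasing path with back edge `uv'`.
* If `x < u` and some `U`-vertex of the segment is at least `u`, then `uv` is a back edge of the
  segment itself.
* If `u` exceeds every `U`-vertex of the segment, then `v, x, …, v', u` is an increasing path with
  back edge `uv`.
-/

section Lists

variable {γ : Type*}

theorem exists_infix_cons_concat_of_mem {l : List γ} {x y : γ} (hx : x ∈ l) (hy : y ∈ l)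
    (hxy : x ≠ y) : ∃ m, x :: (m ++ [y]) <:+: l ∨ y :: (m ++ [x]) <:+: l := by
  obtain ⟨s, t, rfl⟩ := append_of_mem hx
  obtain hy | hy : y ∈ s ∨ y ∈ t := by simpa [hxy.symm] using hy
  · obtain ⟨s₁, s₂, rfl⟩ := append_of_mem hy
    exact ⟨s₂, .inr ⟨s₁, t, by simp⟩⟩
  · obtain ⟨t₁, t₂, rfl⟩ := append_of_mem hy
    exact ⟨t₁, .inl ⟨s, t₂, by simp⟩⟩

theorem listLeast_cons_of_pairwise_lt [Preorder γ] {a : γ} {l : List γ}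
    (h : (a :: l).Pairwise (· < ·)) : ListLeast (a :: l) a :=
  ⟨mem_cons_self, forall_mem_cons.2 ⟨le_rfl, fun _ hb ↦ (rel_of_pairwise_cons h hb).le⟩⟩

theorem exists_listGreatest [LinearOrder γ] {l : List γ} (hl : l ≠ []) :
    ∃ a, ListGreatest l a := by
  obtain ⟨a, ha, hmax⟩ := l.toFinset.exists_max_image id (toFinset_nonempty_iff l |>.2 hl)
  exact ⟨a, mem_toFinset.1 ha, fun b hb ↦ hmax b (mem_toFinset.2 hb)⟩

end Lists

section Vertices

variable {α β : Type*} (l l' : List (α ⊕ β)) (u : α) (v : β)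

@[simp] theorem uVerts_nil : uVerts ([] : List (α ⊕ β)) = [] := rfl

@[simp] theorem vVerts_nil : vVerts ([] : List (α ⊕ β)) = [] := rfl

@[simp] theorem uVerts_cons_inl : uVerts (Sum.inl u :: l) = u :: uVerts l := rfl

@[simp] theorem uVerts_cons_inr : uVerts (Sum.inr v :: l) = uVerts l := rfl

@[simp] theorem vVerts_cons_inl : vVerts (Sum.inl u :: l) = vVerts l := rfl

@[simp] theorem vVerts_cons_inr : vVerts (Sum.inr v :: l) = v :: vVerts l := rfl

@[simp] theorem uVerts_append : uVerts (l ++ l') = uVerts l ++ uVerts l' := filterMap_append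

@[simp] theorem vVerts_append : vVerts (l ++ l') = vVerts l ++ vVerts l' := filterMap_append

@[simp] theorem uVerts_reverse : uVerts l.reverse = (uVerts l).reverse := filterMap_reverse

@[simp] theorem vVerts_reverse : vVerts l.reverse = (vVerts l).reverse := filterMap_reverse

@[simp] theorem uVerts_map_swap : uVerts (l.map Sum.swap) = vVerts l := by
  simp only [uVerts, vVerts, filterMap_map]
  exact filterMap_congr fun x _ ↦ by cases x <;> rfl

@[simp] theorem vVerts_map_swap : vVerts (l.map Sum.swap) = uVerts l := by
  simp only [uVerts, vVerts, filterMap_map]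
  exact filterMap_congr fun x _ ↦ by cases x <;> rfl

theorem internalVerts_map_swap :
    internalVerts (l.map Sum.swap) = (internalVerts l).map Sum.swap := by
  simp only [internalVerts, map_drop, map_dropLast]

variable {l u v}

@[simp] theorem mem_uVerts : u ∈ uVerts l ↔ Sum.inl u ∈ l := by
  simp [uVerts, Sum.getLeft?_eq_some_iff]

@[simp] theorem mem_vVerts : v ∈ vVerts l ↔ Sum.inr v ∈ l := by
  simp [vVerts, Sum.getRight?_eq_some_iff]

theorem nodup_of_nodup_uVerts_of_nodup_vVerts (hu : (uVerts l).Nodup) (hv : (vVerts l).Nodup) :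
    l.Nodup := by
  induction l with
  | nil => exact nodup_nil
  | cons x l ih => cases x <;> simp_all

end Vertices

section Adjacency

variable {α β : Type*} {E : Set (α × β)} {x y : α ⊕ β}

theorem BipAdj.symm (h : BipAdj E x y) : BipAdj E y x := by
  cases x <;> cases y <;> exact h

theorem bipAdj_swap : BipAdj (Prod.swap ⁻¹' E) x.swap y.swap ↔ BipAdj E x y := by
  cases x <;> cases y <;> rfl

theorem BipAdj.exists_eq_inl_of_inr {v : β} (h : BipAdj E (Sum.inr v) y) :
    ∃ u, y = Sum.inl u := by
  cases y with
  | inl u => exact ⟨u, rfl⟩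
  | inr _ => exact h.elim

end Adjacency

/-- A walk whose `U`-vertices and `V`-vertices both strictly increase. Such a walk is automatically
simple, and the forward paths are the nonempty increasing paths and their reversals. -/
structure IsIncreasingPath {α β : Type*} [Preorder α] [Preorder β]
    (E : Set (α × β)) (ws : List (α ⊕ β)) : Prop where
  isChain : ws.IsChain (BipAdj E)
  pairwise_uVerts : (uVerts ws).Pairwise (· < ·)
  pairwise_vVerts : (vVerts ws).Pairwise (· < ·)

namespace IsIncreasingPath

variable {α β : Type*} [Preorder α] [Preorder β] {E : Set (α × β)} {ws l : List (α ⊕ β)}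
  {u : α} {v : β}

theorem nodup (h : IsIncreasingPath E ws) : ws.Nodup :=
  nodup_of_nodup_uVerts_of_nodup_vVerts h.pairwise_uVerts.nodup h.pairwise_vVerts.nodup

theorem of_infix (h : IsIncreasingPath E ws) (hl : l <:+: ws) : IsIncreasingPath E l where
  isChain := h.isChain.infix hl
  pairwise_uVerts := h.pairwise_uVerts.sublist (hl.sublist.filterMap _)
  pairwise_vVerts := h.pairwise_vVerts.sublist (hl.sublist.filterMap _)

theorem map_swap (h : IsIncreasingPath E ws) :
    IsIncreasingPath (Prod.swap ⁻¹' E) (ws.map Sum.swap) where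
  isChain := (isChain_map _).2 (h.isChain.imp fun _ _ ↦ bipAdj_swap.2)
  pairwise_uVerts := by simpa only [uVerts_map_swap] using h.pairwise_vVerts
  pairwise_vVerts := by simpa only [vVerts_map_swap] using h.pairwise_uVerts

theorem cons_inl (h : IsIncreasingPath E (Sum.inr v :: l)) (huv : (u, v) ∈ E)
    (hu : ∀ x ∈ uVerts l, u < x) : IsIncreasingPath E (Sum.inl u :: Sum.inr v :: l) where
  isChain := h.isChain.cons_cons huv
  pairwise_uVerts := h.pairwise_uVerts.cons hu
  pairwise_vVerts := h.pairwise_vVerts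

theorem concat_inl (h : IsIncreasingPath E (l ++ [Sum.inr v])) (huv : (u, v) ∈ E)
    (hu : ∀ x ∈ uVerts l, x < u) :
    IsIncreasingPath E (l ++ [Sum.inr v, Sum.inl u]) where
  isChain := by
    rw [isChain_append_cons_cons]
    exact ⟨h.isChain, huv, isChain_singleton _⟩
  pairwise_uVerts := by
    have hl : (uVerts l).Pairwise (· < ·) := by simpa using h.pairwise_uVerts
    simpa [pairwise_append, hl] using hu
  pairwise_vVerts := by simpa using h.pairwise_vVerts

end IsIncreasingPath

section ForwardPath

variable {α β : Type*} [Preorder α] [Preorder β] {E : Set (α × β)} {ws : List (α ⊕ β)}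

theorem isIncreasingPath_reverse_iff :
    IsIncreasingPath E ws.reverse ↔ ws.IsChain (BipAdj E) ∧
      (uVerts ws).Pairwise (· > ·) ∧ (vVerts ws).Pairwise (· > ·) := by
  have hadj : ws.reverse.IsChain (BipAdj E) ↔ ws.IsChain (BipAdj E) := by
    rw [isChain_reverse]
    exact ⟨fun h ↦ h.imp fun _ _ ↦ BipAdj.symm, fun h ↦ h.imp fun _ _ ↦ BipAdj.symm⟩
  have hU : (uVerts ws.reverse).Pairwise (· < ·) ↔ (uVerts ws).Pairwise (· > ·) := by
    rw [uVerts_reverse, pairwise_reverse]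
  have hV : (vVerts ws.reverse).Pairwise (· < ·) ↔ (vVerts ws).Pairwise (· > ·) := by
    rw [vVerts_reverse, pairwise_reverse]
  rw [← hadj, ← hU, ← hV]
  exact ⟨fun ⟨hE, hu, hv⟩ ↦ ⟨hE, hu, hv⟩, fun ⟨hE, hu, hv⟩ ↦ ⟨hE, hu, hv⟩⟩

theorem isForwardPath_iff :
    IsForwardPath E ws ↔
      ws ≠ [] ∧ (IsIncreasingPath E ws ∨ IsIncreasingPath E ws.reverse) := by
  constructor
  · rintro ⟨⟨hne, hE, -⟩, ⟨hu, hv⟩ | ⟨hu, hv⟩⟩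
    · exact ⟨hne, .inl ⟨hE, hu.pairwise, hv.pairwise⟩⟩
    · exact ⟨hne, .inr (isIncreasingPath_reverse_iff.2 ⟨hE, hu.pairwise, hv.pairwise⟩)⟩
  · rintro ⟨hne, h | h⟩
    · exact ⟨⟨hne, h.isChain, h.nodup⟩,
        .inl ⟨h.pairwise_uVerts.isChain, h.pairwise_vVerts.isChain⟩⟩
    · obtain ⟨hE, hu, hv⟩ := isIncreasingPath_reverse_iff.1 h
      exact ⟨⟨hne, hE, nodup_reverse.1 h.nodup⟩, .inr ⟨hu.isChain, hv.isChain⟩⟩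

theorem IsForwardPath.map_swap (h : IsForwardPath E ws) :
    IsForwardPath (Prod.swap ⁻¹' E) (ws.map Sum.swap) := by
  obtain ⟨hne, h⟩ := isForwardPath_iff.1 h
  refine isForwardPath_iff.2 ⟨by simpa using hne, h.imp (·.map_swap) fun h ↦ ?_⟩
  simpa only [map_reverse] using h.map_swap

theorem HasBackEdge.map_swap (h : HasBackEdge E ws) :
    HasBackEdge (Prod.swap ⁻¹' E) (ws.map Sum.swap) := by
  simp only [HasBackEdge, internalVerts_map_swap, uVerts_map_swap, vVerts_map_swap]
  exact h.symm

theorem IsPRBG.swap (hG : IsPRBG E) : IsPRBG (Prod.swap ⁻¹' E) :=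
  fun _ hws hback ↦ hG _ hws.map_swap hback.map_swap

end ForwardPath

section PathRestricted

variable {α β : Type*} {E : Set (α × β)} {l : List (α ⊕ β)} {u x : α} {v v' : β}

theorem IsIncreasingPath.hasBackEdge_cons_inl [Preorder α] [LinearOrder β]
    (h : IsIncreasingPath E (Sum.inl u :: Sum.inr v :: l)) (huv' : (u, v') ∈ E) (hv : v < v')
    {b : β} (hb : b ∈ vVerts l) (hv' : v' ≤ b) :
    HasBackEdge E (Sum.inl u :: Sum.inr v :: l) := by
  have hl : l ≠ [] := ne_nil_of_mem (mem_vVerts.1 hb)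
  have hvLeast : ListLeast (v :: vVerts l) v := listLeast_cons_of_pairwise_lt h.pairwise_vVerts
  have hinternal :
      internalVerts (Sum.inl u :: Sum.inr v :: l) = Sum.inr v :: l.dropLast := by
    simp [internalVerts, dropLast_cons_of_ne_nil hl]
  have hvInternal :
      ListLeast (vVerts (internalVerts (Sum.inl u :: Sum.inr v :: l))) v := by
    rw [hinternal, vVerts_cons_inr]
    exact listLeast_cons_of_pairwise_lt <|
      h.pairwise_vVerts.sublist (((dropLast_sublist l).filterMap _).cons_cons v)
  obtain ⟨d, hd⟩ := exists_listGreatest (cons_ne_nil v (vVerts l))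
  exact .inl ⟨u, v, d, v, v', listLeast_cons_of_pairwise_lt h.pairwise_uVerts, hvLeast, hd,
    hvInternal, huv', hv.le, hv'.trans (hd.2 b (mem_cons_of_mem v hb)), hv⟩

theorem IsPRBG.notMem_of_isIncreasingPath_cons_inl [Preorder α] [LinearOrder β]
    (hG : IsPRBG E) (h : IsIncreasingPath E (Sum.inl u :: Sum.inr v :: l)) (hv : v < v')
    {b : β} (hb : b ∈ vVerts l) (hv' : v' ≤ b) : (u, v') ∉ E := fun huv' ↦
  hG _ (isForwardPath_iff.2 ⟨cons_ne_nil _ _, .inl h⟩) (h.hasBackEdge_cons_inl huv' hv hb hv')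

theorem IsPRBG.notMem_of_isIncreasingPath_cons_inr [LinearOrder α] [Preorder β]
    (hG : IsPRBG E) (h : IsIncreasingPath E (Sum.inr v :: Sum.inl x :: l)) (hx : x < u)
    {b : α} (hb : b ∈ uVerts l) (hu : u ≤ b) : (u, v) ∉ E :=
  hG.swap.notMem_of_isIncreasingPath_cons_inl h.map_swap hx
    (by simpa only [vVerts_map_swap] using hb) hu

variable [LinearOrder α] [LinearOrder β]

theorem IsPRBG.notMem_of_isIncreasingPath_of_ne (hG : IsPRBG E)
    (h : IsIncreasingPath E (Sum.inr v :: Sum.inl x :: (l ++ [Sum.inr v'])))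
    (hux : u ≠ x) (huv : (u, v) ∈ E) : (u, v') ∉ E := by
  intro huv'
  obtain hux | hxu := hux.lt_or_gt
  · have hvv' : v < v' := rel_of_pairwise_cons h.pairwise_vVerts (by simp)
    have hu : ∀ y ∈ uVerts (Sum.inl x :: (l ++ [Sum.inr v'])), u < y := fun y hy ↦
      hux.trans_le ((listLeast_cons_of_pairwise_lt h.pairwise_uVerts).2 y hy)
    exact hG.notMem_of_isIncreasingPath_cons_inl (h.cons_inl huv hu) hvv' (b := v') (by simp)
      le_rfl huv'
  by_cases hmax : ∀ y ∈ uVerts l, y < u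
  · have hu : ∀ y ∈ uVerts (Sum.inr v :: Sum.inl x :: l), y < u := by
      simpa only [uVerts_cons_inr, uVerts_cons_inl, forall_mem_cons] using ⟨hxu, hmax⟩
    exact hG.notMem_of_isIncreasingPath_cons_inr (h.concat_inl huv' hu) hxu (b := u) (by simp)
      le_rfl huv
  · push Not at hmax
    obtain ⟨y, hy, huy⟩ := hmax
    exact hG.notMem_of_isIncreasingPath_cons_inr h hxu (by simpa using hy) huy huv

theorem IsPRBG.notMem_of_infix (hG : IsPRBG E) {ws : List (α ⊕ β)} (h : IsIncreasingPath E ws)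
    (hl : Sum.inr v :: (l ++ [Sum.inr v']) <:+: ws) (hu : Sum.inl u ∉ ws) (huv : (u, v) ∈ E) :
    (u, v') ∉ E := by
  have hseg := h.of_infix hl
  cases l with
  | nil => exact absurd hseg.isChain.rel id
  | cons y l =>
    obtain ⟨x, rfl⟩ := BipAdj.exists_eq_inl_of_inr hseg.isChain.rel
    refine hG.notMem_of_isIncreasingPath_of_ne hseg ?_ huv
    rintro rfl
    exact hu (hl.subset (by simp))

theorem IsPRBG.eq_of_bipAdj_inl (hG : IsPRBG E) {ws : List (α ⊕ β)} (h : IsIncreasingPath E ws)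
    (hu : Sum.inl u ∉ ws) {y z : α ⊕ β} (hy : y ∈ ws) (hz : z ∈ ws)
    (huy : BipAdj E (Sum.inl u) y) (huz : BipAdj E (Sum.inl u) z) : y = z := by
  cases y with
  | inl => exact huy.elim
  | inr v =>
    cases z with
    | inl => exact huz.elim
    | inr v' =>
      by_contra hne
      obtain ⟨m, hm | hm⟩ := exists_infix_cons_concat_of_mem hy hz hne
      · exact hG.notMem_of_infix h hm hu huy huz
      · exact hG.notMem_of_infix h hm hu huz huy

theorem IsPRBG.eq_of_bipAdj (hG : IsPRBG E) {ws : List (α ⊕ β)} (h : IsIncreasingPath E ws)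
    {w : α ⊕ β} (hw : w ∉ ws) {y z : α ⊕ β} (hy : y ∈ ws) (hz : z ∈ ws)
    (hwy : BipAdj E w y) (hwz : BipAdj E w z) : y = z := by
  cases w with
  | inl u => exact hG.eq_of_bipAdj_inl h hw hy hz hwy hwz
  | inr v =>
    have swap_injective : Function.Injective (Sum.swap : α ⊕ β → β ⊕ α) :=
      Sum.swap_leftInverse.injective
    exact swap_injective <| hG.swap.eq_of_bipAdj_inl h.map_swap
      (fun hv ↦ hw ((mem_map_of_injective swap_injective).1 hv))
      (mem_map_of_mem hy) (mem_map_of_mem hz) (bipAdj_swap.2 hwy) (bipAdj_swap.2 hwz)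

end PathRestricted

/-- Let `G` be a path-restricted ordered bipartite graph, `P` a forward path in `G`, and `w`
a vertex of `G` not lying on `P`.  Then at most one edge of `G` joins `w` to a vertex of
`P`. -/
theorem prbg_at_most_one_edge_to_forward_path {α β : Type*} [LinearOrder α] [LinearOrder β]
    (E : Set (α × β)) (hG : IsPRBG E) (ws : List (α ⊕ β)) (hP : IsForwardPath E ws)
    (w : α ⊕ β) (hw : w ∉ ws) :
    ∀ x ∈ ws, ∀ y ∈ ws, BipAdj E w x → BipAdj E w y → x = y := by
  intro x hx y hy hwx hwy
  obtain ⟨-, hinc | hinc⟩ := isForwardPath_iff.1 hP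
  · exact hG.eq_of_bipAdj hinc hw hx hy hwx hwy
  · exact hG.eq_of_bipAdj hinc (mt mem_reverse.1 hw) (mem_reverse.2 hx) (mem_reverse.2 hy) hwx hwy
end
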